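/- Let F be a Ferrers diagram of semiperimeter n+1, T ∈ EWtab(F), S = S(T) its supplementary tableau, and let k, k' ∈ cols(F) with k < k'. Then the following are equivalent: (i) for every j' ∈ rows(F) with j' < k, if T_{j'k'} = 0 then T_{j'k} = 0; (ii) in CanonTop(φ_TC(T)), the column k' lies in the same block as k or in a later block than k. -/

import Mathlib

open Classical

/-- A Ferrers diagram of semiperimeter `n + 1`, encoded by the set of its row labels
(labels `0, …, n` run along the south-east border; `0` labels the top row and the
last label `n` is a column label). -/
structure Ferrers (n : ℕ) where
  rows : Finset (Fin (n + 1))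
  zero_mem : 0 ∈ rows
  last_not_mem : Fin.last n ∉ rows

namespace Ferrers

/-- `(i, j)` is a cell of the diagram: `i` is a row label, `j` a column label, `i < j`. -/
def Cell {n : ℕ} (F : Ferrers n) (i j : Fin (n + 1)) : Prop :=
  i ∈ F.rows ∧ j ∉ F.rows ∧ i < j

/-- Adjacency in the Ferrers graph `G(F)`. -/
def Adj {n : ℕ} (F : Ferrers n) (u v : Fin (n + 1)) : Prop :=
  F.Cell u v ∨ F.Cell v u

/-- Degree of a vertex in `G(F)`. -/
noncomputable def deg {n : ℕ} (F : Ferrers n) (v : Fin (n + 1)) : ℕ :=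
  {u | F.Adj v u}.ncard

/-- Toppling a single vertex.  The height at the sink `0` is kept equal to `c 0`
(grains sent to the sink vanish); toppling the sink sends one grain to each of
its neighbours. -/
noncomputable def topple {n : ℕ} (F : Ferrers n) (c : Fin (n + 1) → ℕ)
    (v : Fin (n + 1)) : Fin (n + 1) → ℕ :=
  fun u =>
    if u = 0 then c 0
    else if u = v then c v - F.deg v
    else if F.Adj v u then c u + 1
    else c u

/-- Toppling the vertices of a list in order. -/
noncomputable def toppleList {n : ℕ} (F : Ferrers n) (c : Fin (n + 1) → ℕ)
    (l : List (Fin (n + 1))) : Fin (n + 1) → ℕ :=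
  l.foldl F.topple c

/-- Simultaneous toppling of a set of vertices. -/
noncomputable def toppleSet {n : ℕ} (F : Ferrers n) (c : Fin (n + 1) → ℕ)
    (S : Set (Fin (n + 1))) : Fin (n + 1) → ℕ :=
  fun u =>
    if u = 0 then c 0
    else c u + {w ∈ S | F.Adj w u}.ncard - if u ∈ S then F.deg u else 0

/-- A configuration is stable if every non-sink vertex has fewer grains than its degree. -/
def Stable {n : ℕ} (F : Ferrers n) (c : Fin (n + 1) → ℕ) : Prop :=
  ∀ v, v ≠ 0 → c v < F.deg v

/-- A Dhar (burning) ordering for `c`: an ordering `v₀ = 0, v₁, …, vₙ` of all the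
vertices such that each `vᵢ` (`i ≥ 1`) is unstable after toppling `v₀, …, v_{i-1}`. -/
def DharSeq {n : ℕ} (F : Ferrers n) (c : Fin (n + 1) → ℕ) (l : List (Fin (n + 1))) : Prop :=
  l.length = n + 1 ∧ l.Nodup ∧ l.head? = some 0 ∧
    ∀ i, ∀ h : i < l.length, 1 ≤ i →
      F.deg (l.get ⟨i, h⟩) ≤ F.toppleList c (l.take i) (l.get ⟨i, h⟩)

/-- Recurrent configurations (via Dhar's criterion).  The height at the sink is
normalised to `0`. -/
def Recurrent {n : ℕ} (F : Ferrers n) (c : Fin (n + 1) → ℕ) : Prop :=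
  c 0 = 0 ∧ F.Stable c ∧ ∃ l, F.DharSeq c l

/-- Minimal recurrent configurations: recurrent with minimal total number of grains. -/
def RecMin {n : ℕ} (F : Ferrers n) (c : Fin (n + 1) → ℕ) : Prop :=
  F.Recurrent c ∧ ∀ c', F.Recurrent c' → (∑ v, c v) ≤ ∑ v, c' v

/-- Canonical toppling: block `0` is `{0}` (the sink); from then on, blocks with odd
index are the sets of currently unstable column vertices and blocks with even index
the sets of currently unstable row vertices.  The first component is the configuration
just before toppling the block recorded in the second component. -/
noncomputable def canonAux {n : ℕ} (F : Ferrers n) (c : Fin (n + 1) → ℕ) :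
    ℕ → ((Fin (n + 1) → ℕ) × Set (Fin (n + 1)))
  | 0 => (c, {0})
  | k + 1 =>
    let c' := F.toppleSet (canonAux F c k).1 (canonAux F c k).2
    (c', {v | v ≠ 0 ∧ (if k % 2 = 0 then v ∉ F.rows else v ∈ F.rows) ∧ F.deg v ≤ c' v})

/-- The `k`-th block of the canonical toppling of `c`:
`canonTop F c 0 = U⁰ = {0}`, `canonTop F c (2i-1) = Vⁱ`, `canonTop F c (2i) = Uⁱ`. -/
noncomputable def canonTop {n : ℕ} (F : Ferrers n) (c : Fin (n + 1) → ℕ) (k : ℕ) :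
    Set (Fin (n + 1)) :=
  (F.canonAux c k).2

/-- The configuration just before toppling the `k`-th block of the canonical toppling. -/
noncomputable def canonConfig {n : ℕ} (F : Ferrers n) (c : Fin (n + 1) → ℕ) (k : ℕ) :
    Fin (n + 1) → ℕ :=
  (F.canonAux c k).1

/-- The index of the block of the canonical toppling of `c` containing `v`. -/
noncomputable def bIdx {n : ℕ} (F : Ferrers n) (c : Fin (n + 1) → ℕ) (v : Fin (n + 1)) : ℕ :=
  sInf {k | v ∈ F.canonTop c k}

/-- `T` is a EW-tableau on `F` (entries of non-cells are normalised to `false`):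
the top row contains only `1`s, every other row contains a `0`, and there is no
rectangle with two diagonally opposite `0`s and two `1`s in the other corners. -/
def IsEW {n : ℕ} (F : Ferrers n) (T : Fin (n + 1) → Fin (n + 1) → Bool) : Prop :=
  (∀ i j, ¬F.Cell i j → T i j = false) ∧
  (∀ j, F.Cell 0 j → T 0 j = true) ∧
  (∀ i, i ∈ F.rows → i ≠ 0 → ∃ j, F.Cell i j ∧ T i j = false) ∧
  (∀ i i' j j', F.Cell i j → F.Cell i j' → F.Cell i' j → F.Cell i' j' →
    T i j = T i' j' → T i j' = T i' j → T i j = T i j')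

/-- The configuration associated to a tableau: row vertices count the `1`s in their
row, column vertices count the `0`s in their column (the sink is normalised to `0`). -/
noncomputable def phiTC {n : ℕ} (F : Ferrers n) (T : Fin (n + 1) → Fin (n + 1) → Bool) :
    Fin (n + 1) → ℕ :=
  fun v =>
    if v = 0 then 0
    else if v ∈ F.rows then {j | F.Cell v j ∧ T v j = true}.ncard
    else {i | F.Cell i v ∧ T i v = false}.ncard

/-- The tableau associated to a (minimal recurrent) configuration: a cell `(i, j)`
gets a `1` exactly when `i` lies in an earlier block than `j` in the canonical
toppling of `c`. -/
noncomputable def phiCT {n : ℕ} (F : Ferrers n) (c : Fin (n + 1) → ℕ) :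
    Fin (n + 1) → Fin (n + 1) → Bool :=
  fun i j => if F.Cell i j ∧ F.bIdx c i < F.bIdx c j then true else false

/-- The supplementary tableau of `T`: `S i j = 1` exactly when the row vertex `i`
lies in an earlier block than the column vertex `j` in `CanonTop (φ_TC T)`. -/
noncomputable def suppS {n : ℕ} (F : Ferrers n) (T : Fin (n + 1) → Fin (n + 1) → Bool)
    (i j : Fin (n + 1)) : Bool :=
  if F.bIdx (F.phiTC T) i < F.bIdx (F.phiTC T) j then true else false

/-- The entry of `T` in cell `(j, k)` is a cornersupport entry. -/
def Cornersupport {n : ℕ} (F : Ferrers n) (T : Fin (n + 1) → Fin (n + 1) → Bool)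
    (j k : Fin (n + 1)) : Prop :=
  ∃ j' k', j' ∈ F.rows ∧ k' ∉ F.rows ∧ j' ≠ j ∧ k' ≠ k ∧
    F.suppS T j' k' = !(T j k) ∧ F.suppS T j' k = T j k ∧ F.suppS T j k' = T j k

/-- `ν_v(T)`: the number of non-cornersupport `0`s in row `v` (if `v` is a row label),
resp. non-cornersupport `1`s in column `v` (if `v` is a column label). -/
noncomputable def nu {n : ℕ} (F : Ferrers n) (T : Fin (n + 1) → Fin (n + 1) → Bool)
    (v : Fin (n + 1)) : ℕ :=
  if v ∈ F.rows then {k | F.Cell v k ∧ T v k = false ∧ ¬F.Cornersupport T v k}.ncard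
  else {i | F.Cell i v ∧ T i v = true ∧ ¬F.Cornersupport T i v}.ncard

/-- `μ_v(c)`: if `v ∈ Uⁱ`, the number of `k ∈ Vⁱ` with `k > v`; if `v ∈ Vⁱ`,
the number of `k ∈ U^{i-1}` with `k < v`.  In both cases the relevant block is the
one immediately preceding the block of `v`. -/
noncomputable def mu {n : ℕ} (F : Ferrers n) (c : Fin (n + 1) → ℕ) (v : Fin (n + 1)) : ℕ :=
  if v ∈ F.rows then {k | v < k ∧ k ∈ F.canonTop c (F.bIdx c v - 1)}.ncard
  else {k | k < v ∧ k ∈ F.canonTop c (F.bIdx c v - 1)}.ncard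

/-- The minimal recurrent configuration with the same canonical toppling as `c`:
if `j ∈ Uⁱ` then `minrec c j = |{ℓ ∈ Vᵏ : j < ℓ, k > i}|`, and if `j ∈ Vⁱ` then
`minrec c j = |{ℓ ∈ Uᵏ : ℓ < j, k ≥ i}|` (blocks `Vᵏ` sit at odd index `2k - 1`,
blocks `Uᵏ` at even index `2k`). -/
noncomputable def minrecFun {n : ℕ} (F : Ferrers n) (c : Fin (n + 1) → ℕ) :
    Fin (n + 1) → ℕ :=
  fun j =>
    if j = 0 then 0
    else if j ∈ F.rows then
      {l | j < l ∧ ∃ k, F.bIdx c j < 2 * k + 1 ∧ l ∈ F.canonTop c (2 * k + 1)}.ncard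
    else
      {l | l < j ∧ ∃ k, F.bIdx c j < 2 * k ∧ l ∈ F.canonTop c (2 * k)}.ncard

/-- The number of edges of `G(F)` (equivalently, the number of cells of `F`). -/
noncomputable def edgeCount {n : ℕ} (F : Ferrers n) : ℕ :=
  {p : Fin (n + 1) × Fin (n + 1) | F.Cell p.1 p.2}.ncard

end Ferrers

namespace Ferrers

variable {n : ℕ}

/-- The orientation of `G(F)` read off from a filling `T`: a `1` in cell `(i, j)` orients the
edge from the row `i` to the column `j`, a `0` orients it from `j` to `i`. -/
def Pred (F : Ferrers n) (T : Fin (n + 1) → Fin (n + 1) → Bool) (u v : Fin (n + 1)) : Prop :=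
  (F.Cell u v ∧ T u v = true) ∨ (F.Cell v u ∧ T v u = false)

/-- The vertices toppled strictly before the `k`-th block of the canonical toppling. -/
def toppledBefore (F : Ferrers n) (c : Fin (n + 1) → ℕ) (k : ℕ) : Set (Fin (n + 1)) :=
  {v | ∃ i < k, v ∈ F.canonTop c i}

variable {F : Ferrers n} {T : Fin (n + 1) → Fin (n + 1) → Bool} {c : Fin (n + 1) → ℕ}
  {u v : Fin (n + 1)} {k : ℕ}

theorem not_cell_of_cell (h : F.Cell u v) : ¬F.Cell v u := fun h' => h.2.1 h'.1

theorem adj_comm : F.Adj u v ↔ F.Adj v u := or_comm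

theorem adj_iff_pred : F.Adj u v ↔ F.Pred T u v ∨ F.Pred T v u := by
  unfold Adj Pred
  cases T u v <;> cases T v u <;> simp <;> tauto

theorem Pred.asymm (h : F.Pred T u v) : ¬F.Pred T v u := by
  rintro (⟨h₁, h₂⟩ | ⟨h₁, h₂⟩) <;> rcases h with ⟨h₃, h₄⟩ | ⟨h₃, h₄⟩ <;>
    first
    | exact not_cell_of_cell h₁ h₃
    | simp_all

theorem deg_eq_add (F : Ferrers n) (T : Fin (n + 1) → Fin (n + 1) → Bool) (v : Fin (n + 1)) :
    F.deg v = {w | F.Pred T w v}.ncard + {w | F.Pred T v w}.ncard := by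
  have hdisj : Disjoint {w | F.Pred T w v} {w | F.Pred T v w} :=
    Set.disjoint_left.2 fun w h h' => Pred.asymm h h'
  rw [← Set.ncard_union_eq hdisj, deg]
  congr 1
  ext w
  simp only [Set.mem_ofPred_eq, Set.mem_union, adj_iff_pred (T := T)]
  exact or_comm

theorem phiTC_eq_ncard (hv : v ≠ 0) : F.phiTC T v = {w | F.Pred T v w}.ncard := by
  unfold phiTC Pred
  rw [if_neg hv]
  split_ifs with h <;> congr 1 <;> ext w <;> simp [Cell, h]

/-- An EW-tableau has no directed cycle: a set in which every vertex has a predecessor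
within the set is empty. -/
theorem IsEW.eq_empty_of_forall_pred (hT : F.IsEW T) (X : Finset (Fin (n + 1)))
    (hX : ∀ v ∈ X, ∃ w ∈ X, F.Pred T w v) : X = ∅ := by
  induction X using Finset.strongInduction with
  | H X ih =>
  by_contra hne
  obtain ⟨x, hx⟩ := Finset.nonempty_iff_ne_empty.2 hne
  have hrows : (X.filter (· ∈ F.rows)).Nonempty := by
    by_cases hxr : x ∈ F.rows
    · exact ⟨x, by simp [hx, hxr]⟩
    · obtain ⟨w, hw, h | h⟩ := hX x hx
      · exact ⟨w, by simp [hw, h.1.1]⟩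
      · exact absurd h.1.1 hxr
  obtain ⟨r, hr, hmax⟩ := Finset.exists_max_image _ id hrows
  simp only [Finset.mem_filter, id] at hr hmax
  obtain ⟨j, hj, hrj⟩ := hX r hr.1
  have hrj : F.Cell r j ∧ T r j = false := by
    rcases hrj with h | h
    · exact absurd hr.2 h.1.2.1
    · exact h
  obtain ⟨i, hi, hij⟩ := hX j hj
  have hij : F.Cell i j ∧ T i j = true := by
    rcases hij with h | h
    · exact h
    · exact absurd h.1.1 hrj.1.2.1
  have hir : i ≠ r := by
    rintro rfl
    simp_all
  have hempty : X.erase r = ∅ := by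
    refine ih _ (Finset.erase_ssubset hr.1) fun v hv => ?_
    obtain ⟨w, hw, hwv⟩ := hX v (Finset.mem_of_mem_erase hv)
    by_cases hwr : w = r
    · subst hwr
      have hwv : F.Cell w v ∧ T w v = true := by
        rcases hwv with h | h
        · exact h
        · exact absurd hr.2 h.1.2.1
      have hiv : F.Cell i v :=
        ⟨hij.1.1, hwv.1.2.1, lt_of_le_of_lt (hmax i ⟨hi, hij.1.1⟩) hwv.1.2.2⟩
      refine ⟨i, Finset.mem_erase.2 ⟨hir, hi⟩, Or.inl ⟨hiv, ?_⟩⟩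
      by_contra hne
      have hrect := hT.2.2.2 w i j v hrj.1 hwv.1 hij.1 hiv
      simp_all
    · exact ⟨w, Finset.mem_erase.2 ⟨hwr, hw⟩, hwv⟩
  exact Finset.notMem_empty i (hempty ▸ Finset.mem_erase.2 ⟨hir, hi⟩)

theorem IsEW.exists_pred (hT : F.IsEW T) (hv : v ≠ 0) : ∃ w, F.Pred T w v := by
  by_cases h : v ∈ F.rows
  · obtain ⟨j, hj⟩ := hT.2.2.1 v h hv
    exact ⟨j, Or.inr hj⟩
  · have hc : F.Cell 0 v := ⟨F.zero_mem, h, Fin.pos_of_ne_zero hv⟩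
    exact ⟨0, Or.inl ⟨hc, hT.2.1 v hc⟩⟩

theorem IsEW.not_pred_zero (hT : F.IsEW T) : ¬F.Pred T u 0 := by
  rintro (h | h)
  · exact h.1.2.1 F.zero_mem
  · simp [hT.2.1 u h.1] at h

theorem toppledBefore_succ : F.toppledBefore c (k + 1) = F.toppledBefore c k ∪ F.canonTop c k := by
  ext v
  simp only [toppledBefore, Nat.lt_succ_iff_lt_or_eq, or_and_right, exists_or, exists_eq_left,
    Set.mem_ofPred_eq, Set.mem_union]

theorem mem_canonTop_succ : v ∈ F.canonTop c (k + 1) ↔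
    v ≠ 0 ∧ (if k % 2 = 0 then v ∉ F.rows else v ∈ F.rows) ∧
      F.deg v ≤ F.canonConfig c (k + 1) v := Iff.rfl

theorem canonConfig_succ :
    F.canonConfig c (k + 1) = F.toppleSet (F.canonConfig c k) (F.canonTop c k) := rfl

/-- The predicates maintained by the canonical toppling of `phiTC T`: conservation of grains, and
closure of the toppled set under predecessors. -/
def ToppleInvariant (F : Ferrers n) (T : Fin (n + 1) → Fin (n + 1) → Bool) (k : ℕ) : Prop :=
  (∀ v, v ≠ 0 → F.canonConfig (F.phiTC T) k v +
      (if v ∈ F.toppledBefore (F.phiTC T) k then F.deg v else 0) =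
    F.phiTC T v + {w ∈ F.toppledBefore (F.phiTC T) k | F.Adj w v}.ncard) ∧
  ∀ v ∈ F.toppledBefore (F.phiTC T) k, ∀ w, F.Pred T w v → w ∈ F.toppledBefore (F.phiTC T) k

theorem ToppleInvariant.of_mem_canonTop (hT : F.IsEW T) (hk : F.ToppleInvariant T k)
    (hv : v ∈ F.canonTop (F.phiTC T) k) :
    v ∉ F.toppledBefore (F.phiTC T) k ∧
      ∀ w, F.Pred T w v → w ∈ F.toppledBefore (F.phiTC T) k := by
  rcases k with _ | k
  · obtain rfl : v = 0 := hv
    exact ⟨by simp [toppledBefore], fun w hw => absurd hw hT.not_pred_zero⟩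
  obtain ⟨hv0, -, hdeg⟩ := mem_canonTop_succ.1 hv
  have hA := hk.1 v hv0
  have hsum := deg_eq_add F T v
  rw [phiTC_eq_ncard hv0] at hA
  have hnot : v ∉ F.toppledBefore (F.phiTC T) (k + 1) := by
    intro hmem
    rw [if_pos hmem] at hA
    have hle : {w ∈ F.toppledBefore (F.phiTC T) (k + 1) | F.Adj w v}.ncard ≤ F.deg v :=
      Set.ncard_le_ncard (fun w hw => adj_comm.1 hw.2) (Set.toFinite _)
    have hpos : 0 < {w | F.Pred T w v}.ncard :=
      (Set.ncard_pos (Set.toFinite _)).2 (hT.exists_pred hv0)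
    omega
  refine ⟨hnot, fun w hw => ?_⟩
  rw [if_neg hnot] at hA
  have hsub : {w ∈ F.toppledBefore (F.phiTC T) (k + 1) | F.Adj w v} ⊆ {w | F.Pred T w v} := by
    rintro w ⟨hw, hadj⟩
    rcases (adj_iff_pred (T := T)).1 hadj with h | h
    · exact h
    · exact absurd (hk.2 w hw v h) hnot
  have heq := Set.eq_of_subset_of_ncard_le hsub (by omega) (Set.toFinite _)
  exact (heq.symm ▸ (show w ∈ {w | F.Pred T w v} from hw) :
    w ∈ {w ∈ F.toppledBefore (F.phiTC T) (k + 1) | F.Adj w v}).1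

theorem IsEW.toppleInvariant (hT : F.IsEW T) (k : ℕ) : F.ToppleInvariant T k := by
  induction k with
  | zero => exact ⟨fun v _ => by simp [toppledBefore, canonConfig, canonAux],
      fun v hv => by simp [toppledBefore] at hv⟩
  | succ k ih =>
  refine ⟨fun v hv0 => ?_, fun v hv w hw => ?_⟩
  · have hcard : {w ∈ F.toppledBefore (F.phiTC T) (k + 1) | F.Adj w v}.ncard =
        {w ∈ F.toppledBefore (F.phiTC T) k | F.Adj w v}.ncard +
          {w ∈ F.canonTop (F.phiTC T) k | F.Adj w v}.ncard := by
      rw [← Set.ncard_union_eq (Set.disjoint_left.2 fun w h h' =>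
        (ih.of_mem_canonTop hT h'.1).1 h.1), toppledBefore_succ]
      congr 1
      ext w
      simp [or_and_right]
    have hA := ih.1 v hv0
    rw [hcard, canonConfig_succ]
    simp only [toppleSet, if_neg hv0, toppledBefore_succ, Set.mem_union]
    by_cases hv : v ∈ F.canonTop (F.phiTC T) k
    · have hnot := (ih.of_mem_canonTop hT hv).1
      have hdeg : F.deg v ≤ F.canonConfig (F.phiTC T) k v := by
        rcases k with _ | k
        · exact absurd hv hv0
        · exact (mem_canonTop_succ.1 hv).2.2
      simp only [hnot, hv, if_true, if_false, or_true] at hA ⊢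
      omega
    · simp only [hv, if_false, or_false] at hA ⊢
      omega
  · rw [toppledBefore_succ] at hv ⊢
    rcases hv with hv | hv
    · exact Or.inl (ih.2 v hv w hw)
    · exact Or.inl ((ih.of_mem_canonTop hT hv).2 w hw)

/-- A vertex of the right kind all of whose predecessors have toppled belongs to the next block,
unless it has toppled already. -/
theorem IsEW.mem_canonTop_succ_of_forall_pred (hT : F.IsEW T) (hv0 : v ≠ 0)
    (hpar : if k % 2 = 0 then v ∉ F.rows else v ∈ F.rows)
    (hnot : v ∉ F.toppledBefore (F.phiTC T) (k + 1))
    (hpred : ∀ w, F.Pred T w v → w ∈ F.toppledBefore (F.phiTC T) (k + 1)) :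
    v ∈ F.canonTop (F.phiTC T) (k + 1) := by
  refine mem_canonTop_succ.2 ⟨hv0, hpar, ?_⟩
  have hA := (hT.toppleInvariant (k + 1)).1 v hv0
  rw [if_neg hnot, phiTC_eq_ncard hv0] at hA
  have hle : {w | F.Pred T w v}.ncard ≤
      {w ∈ F.toppledBefore (F.phiTC T) (k + 1) | F.Adj w v}.ncard :=
    Set.ncard_le_ncard (fun w hw => ⟨hpred w hw, adj_iff_pred.2 (Or.inl hw)⟩) (Set.toFinite _)
  have hsum := deg_eq_add F T v
  omega

theorem bIdx_le (hv : v ∈ F.canonTop c k) : F.bIdx c v ≤ k := Nat.sInf_le hv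

/-- Every vertex topples in the canonical toppling of `phiTC T`. -/
theorem IsEW.mem_canonTop_bIdx (hT : F.IsEW T) (v : Fin (n + 1)) :
    v ∈ F.canonTop (F.phiTC T) (F.bIdx (F.phiTC T) v) := by
  suffices h : Finset.univ.filter (fun v => ∀ k, v ∉ F.canonTop (F.phiTC T) k) = ∅ by
    have hv := Finset.filter_eq_empty_iff.1 h (Finset.mem_univ v)
    push Not at hv
    exact Nat.sInf_mem hv
  refine hT.eq_empty_of_forall_pred _ fun v hv => ?_
  simp only [Finset.mem_filter, Finset.mem_univ, true_and] at hv ⊢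
  by_contra! hcon
  have hv0 : v ≠ 0 := fun h => hv 0 h
  have hpred : ∀ w, F.Pred T w v → ∃ k, w ∈ F.canonTop (F.phiTC T) k := by
    intro w hw
    by_contra! hw'
    exact hcon w hw' hw
  let N := Finset.univ.sup (F.bIdx (F.phiTC T))
  have hN : ∀ m, N ≤ m → ∀ w, F.Pred T w v → w ∈ F.toppledBefore (F.phiTC T) (m + 1) :=
    fun m hm w hw => ⟨F.bIdx (F.phiTC T) w,
      Nat.lt_succ_of_le ((Finset.le_sup (Finset.mem_univ w)).trans hm), Nat.sInf_mem (hpred w hw)⟩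
  have hnot : ∀ m, v ∉ F.toppledBefore (F.phiTC T) m := fun m ⟨i, _, hi⟩ => hv i hi
  by_cases hr : v ∈ F.rows
  · exact hv _ (hT.mem_canonTop_succ_of_forall_pred (k := 2 * N + 1) hv0
      (by rw [if_neg (by omega)]; exact hr) (hnot _) (hN _ (by omega)))
  · exact hv _ (hT.mem_canonTop_succ_of_forall_pred (k := 2 * N) hv0
      (by rw [if_pos (by omega)]; exact hr) (hnot _) (hN _ (by omega)))

/-- Block indices strictly increase along the orientation given by the tableau. -/
theorem IsEW.bIdx_lt_bIdx_of_pred (hT : F.IsEW T) (h : F.Pred T u v) :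
    F.bIdx (F.phiTC T) u < F.bIdx (F.phiTC T) v := by
  obtain ⟨i, hi, hu⟩ :=
    ((hT.toppleInvariant _).of_mem_canonTop hT (hT.mem_canonTop_bIdx v)).2 u h
  exact (bIdx_le hu).trans_lt hi

/-- If every predecessor of the column `u` is a predecessor of the column `v`, then `u` does not
topple after `v`. -/
theorem IsEW.bIdx_le_bIdx_of_forall_pred (hT : F.IsEW T) (hu : u ∉ F.rows) (hv : v ∉ F.rows)
    (h : ∀ w, F.Pred T w u → F.Pred T w v) :
    F.bIdx (F.phiTC T) u ≤ F.bIdx (F.phiTC T) v := by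
  have hmem := hT.mem_canonTop_bIdx v
  generalize F.bIdx (F.phiTC T) v = s at hmem ⊢
  by_cases hbefore : u ∈ F.toppledBefore (F.phiTC T) s
  · obtain ⟨i, hi, hui⟩ := hbefore
    exact (bIdx_le hui).trans hi.le
  have hpred := ((hT.toppleInvariant s).of_mem_canonTop hT hmem).2
  rcases s with _ | s
  · obtain rfl : v = 0 := hmem
    exact absurd F.zero_mem hv
  have hpar := (mem_canonTop_succ.1 hmem).2.1
  have hu0 : u ≠ 0 := fun h0 => hu (h0 ▸ F.zero_mem)
  refine bIdx_le (hT.mem_canonTop_succ_of_forall_pred hu0 ?_ hbefore fun w hw => hpred w (h w hw))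
  split_ifs at hpar ⊢
  · exact hu
  · exact absurd hpar hv

end Ferrers

/-- For columns `k < k'`, the condition "every row `j' < k` with
`T_{j'k'} = 0` also has `T_{j'k} = 0`" holds if and only if `k'` lies in the same
block as `k` or in a later block of `CanonTop (φ_TC T)`. -/
theorem column_condition_iff_block_le {n : ℕ} (F : Ferrers n)
    (T : Fin (n + 1) → Fin (n + 1) → Bool) (hT : F.IsEW T)
    (k k' : Fin (n + 1)) (hk : k ∉ F.rows) (hk' : k' ∉ F.rows) (hkk : k < k') :
    (∀ j' : Fin (n + 1), j' ∈ F.rows → j' < k → T j' k' = false → T j' k = false) ↔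
      F.bIdx (F.phiTC T) k ≤ F.bIdx (F.phiTC T) k' := by
  constructor
  · intro h
    refine hT.bIdx_le_bIdx_of_forall_pred hk hk' fun w hw => ?_
    rcases hw with ⟨hc, hw⟩ | ⟨hc, -⟩
    · refine Or.inl ⟨⟨hc.1, hk', hc.2.2.trans hkk⟩, ?_⟩
      by_contra hne
      have := h w hc.1 hc.2.2 (by simpa using hne)
      simp_all
    · exact absurd hc.1 hk
  · intro h j hj hjk hzero
    by_contra hne
    have h₁ := hT.bIdx_lt_bIdx_of_pred (u := j) (v := k)
      (Or.inl ⟨⟨hj, hk, hjk⟩, by simpa using hne⟩)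
    have h₂ := hT.bIdx_lt_bIdx_of_pred (u := k') (v := j)
      (Or.inr ⟨⟨hj, hk', hjk.trans hkk⟩, hzero⟩)
    omega
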